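/- Let K be a flow kernel, let the LQ coefficients be given, and fix ξ ∈ ℝ^d and m, M ∈ C([0,T]; ℝ^d). Then the deterministic forward–backward Volterra system has exactly one pair of continuous solutions (x, y) on [0,T]. -/

import Mathlib

open MeasureTheory Matrix Set Filter

noncomputable section

abbrev Mat (d : ℕ) := Matrix (Fin d) (Fin d) ℝ
abbrev Vec (d : ℕ) := Fin d → ℝ

/-- A flow kernel on `[0,T]`. -/
structure IsFlowKernel (T : ℝ) (d : ℕ) (K : ℝ → ℝ → Mat d) : Prop where
  diag : ∀ t ∈ Icc (0:ℝ) T, K t t = 1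
  flow : ∀ s ∈ Icc (0:ℝ) T, ∀ u ∈ Icc (0:ℝ) T, ∀ t ∈ Icc (0:ℝ) T, K t s = K t u * K u s
  cont : ContinuousOn (fun t => K t 0) (Icc (0:ℝ) T)

/-- `X` is a continuous solution on `[0,T]` of the controlled forward Volterra state equation
`X t = K t 0 ξ + M t + ∫₀ᵗ K t s (A s X s + B s α s + C s m s) ds`. -/
def SolvesState (T : ℝ) {d κ : ℕ} (K : ℝ → ℝ → Mat d) (A C : ℝ → Mat d)
    (B : ℝ → Matrix (Fin d) (Fin κ) ℝ) (ξ : Vec d) (m M : ℝ → Vec d)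
    (α : ℝ → Vec κ) (X : ℝ → Vec d) : Prop :=
  ContinuousOn X (Icc (0:ℝ) T) ∧
  ∀ t ∈ Icc (0:ℝ) T,
    X t = K t 0 *ᵥ ξ + M t
      + ∫ s in (0:ℝ)..t, K t s *ᵥ (A s *ᵥ X s + B s *ᵥ α s + C s *ᵥ m s)

/-- `(x, y)` is a pair of continuous solutions on `[0,T]` of the deterministic
forward–backward Volterra system. -/
def SolvesFB (T : ℝ) {d κ : ℕ} (K : ℝ → ℝ → Mat d) (A C : ℝ → Mat d)
    (B : ℝ → Matrix (Fin d) (Fin κ) ℝ) (R : ℝ → Matrix (Fin κ) (Fin κ) ℝ)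
    (Qt Qbt St : ℝ → Mat d) (Q Qb S : Mat d) (ξ : Vec d) (m M : ℝ → Vec d)
    (x y : ℝ → Vec d) : Prop :=
  ContinuousOn x (Icc (0:ℝ) T) ∧ ContinuousOn y (Icc (0:ℝ) T) ∧
  (∀ t ∈ Icc (0:ℝ) T,
    x t = K t 0 *ᵥ ξ + M t
      + ∫ s in (0:ℝ)..t,
          K t s *ᵥ (A s *ᵥ x s - B s *ᵥ ((R s)⁻¹ *ᵥ ((B s)ᵀ *ᵥ y s)) + C s *ᵥ m s)) ∧
  (∀ t ∈ Icc (0:ℝ) T,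
    y t = (K T t)ᵀ *ᵥ ((Q + Qb) *ᵥ x T - Qb *ᵥ (S *ᵥ m T))
      + ∫ s in t..T,
          (K s t)ᵀ *ᵥ ((Qt s + Qbt s) *ᵥ x s - Qbt s *ᵥ (St s *ᵥ m s) + (A s)ᵀ *ᵥ y s))

section LinearODE

variable {E : Type*} [NormedAddCommGroup E] [NormedSpace ℝ E] {T : ℝ}

theorem exists_norm_le_of_continuousOn_Icc {F : Type*} [SeminormedAddCommGroup F] {A : ℝ → F}
    (hA : ContinuousOn A (Icc 0 T)) : ∃ L : NNReal, ∀ t ∈ Icc 0 T, ‖A t‖ ≤ L := by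
  obtain ⟨L, hL⟩ := isCompact_Icc.exists_bound_of_continuousOn hA
  exact ⟨L.toNNReal, fun t ht => (hL t ht).trans (Real.le_coe_toNNReal L)⟩

/-- The primitive of a continuous function on `[0,T]` is differentiable on `[0,T]`. -/
theorem hasDerivWithinAt_const_add_integral [CompleteSpace E] (hT : 0 ≤ T) {f : ℝ → E}
    (hf : ContinuousOn f (Icc 0 T)) (c : E) {t : ℝ} (ht : t ∈ Icc 0 T) :
    HasDerivWithinAt (fun t => c + ∫ s in (0 : ℝ)..t, f s) (f t) (Icc 0 T) t :=
  ODE.hasDerivWithinAt_picard_Icc (f := fun s (_ : E) => f s) (u := univ) (α := f)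
    (left_mem_Icc.2 hT) (hf.comp continuousOn_fst fun _ hp => hp.1) hf (fun _ _ => mem_univ _) c ht

theorem intervalIntegrable_of_continuousOn_Icc {F : Type*} [NormedAddCommGroup F] {f : ℝ → F}
    (hf : ContinuousOn f (Icc 0 T)) {a b : ℝ} (ha : a ∈ Icc 0 T) (hb : b ∈ Icc 0 T) :
    IntervalIntegrable f volume a b :=
  (hf.mono (uIcc_subset_Icc ha hb)).intervalIntegrable

/-- The integral operator whose fixed points solve `z' = A z + f`, `z 0 = z₀` on `[0,T]`. -/
def linearPicard [CompleteSpace E] (hT : 0 ≤ T) {A : ℝ → E →L[ℝ] E} {f : ℝ → E}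
    (hA : ContinuousOn A (Icc 0 T)) (hf : ContinuousOn f (Icc 0 T)) (z₀ : E)
    (α : C(Icc 0 T, E)) : C(Icc 0 T, E) where
  toFun t := z₀ + ∫ s in (0 : ℝ)..t, (A s (IccExtend hT α s) + f s)
  continuous_toFun := by
    have h : ContinuousOn (fun s => A s (IccExtend hT α s) + f s) (Icc 0 T) :=
      (hA.clm_apply α.continuous.Icc_extend'.continuousOn).add hf
    exact continuousOn_iff_continuous_domRestrict.1 fun t ht =>
      (hasDerivWithinAt_const_add_integral hT h z₀ ht).continuousWithinAt

theorem dist_iterate_linearPicard_apply_le [CompleteSpace E] (hT : 0 ≤ T) {A : ℝ → E →L[ℝ] E}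
    {f : ℝ → E} (hA : ContinuousOn A (Icc 0 T)) (hf : ContinuousOn f (Icc 0 T)) (z₀ : E)
    {L : NNReal} (hL : ∀ t ∈ Icc 0 T, ‖A t‖ ≤ L) (α β : C(Icc 0 T, E)) (n : ℕ) (t : Icc 0 T) :
    dist ((linearPicard hT hA hf z₀)^[n] α t) ((linearPicard hT hA hf z₀)^[n] β t) ≤
      (L * t) ^ n / n.factorial * dist α β := by
  induction n generalizing t with
  | zero => simpa using ContinuousMap.dist_apply_le_dist t
  | succ n ih =>
    have hint : ∀ γ : C(Icc 0 T, E), IntervalIntegrable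
        (fun s => A s (IccExtend hT γ s) + f s) volume 0 t := fun γ =>
      intervalIntegrable_of_continuousOn_Icc
        ((hA.clm_apply γ.continuous.Icc_extend'.continuousOn).add hf) (left_mem_Icc.2 hT) t.2
    rw [Function.iterate_succ_apply', Function.iterate_succ_apply', dist_eq_norm]
    set γ := (linearPicard hT hA hf z₀)^[n] α
    set δ := (linearPicard hT hA hf z₀)^[n] β
    calc ‖linearPicard hT hA hf z₀ γ t - linearPicard hT hA hf z₀ δ t‖
        = ‖∫ s in (0 : ℝ)..t, A s (IccExtend hT γ s - IccExtend hT δ s)‖ := by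
          change ‖(z₀ + ∫ s in (0 : ℝ)..t, (A s (IccExtend hT γ s) + f s)) -
            (z₀ + ∫ s in (0 : ℝ)..t, (A s (IccExtend hT δ s) + f s))‖ = _
          rw [add_sub_add_left_eq_sub, ← intervalIntegral.integral_sub (hint γ) (hint δ)]
          simp
      _ ≤ ∫ s in (0 : ℝ)..t, L * ((L * s) ^ n / n.factorial * dist α β) := by
          refine intervalIntegral.norm_integral_le_of_norm_le t.2.1 (.of_forall fun s hs => ?_)
            (Continuous.intervalIntegrable (by fun_prop) _ _)
          have hs' : s ∈ Icc 0 T := ⟨hs.1.le, hs.2.trans t.2.2⟩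
          refine (A s).le_of_opNorm_le_of_le (hL s hs') ?_
          rw [IccExtend_of_mem _ _ hs', IccExtend_of_mem _ _ hs', ← dist_eq_norm]
          exact ih ⟨s, hs'⟩
      _ = (L * t) ^ (n + 1) / (n + 1).factorial * dist α β := by
          simp only [mul_pow, intervalIntegral.integral_const_mul, intervalIntegral.integral_div,
            intervalIntegral.integral_mul_const, integral_pow, Nat.factorial_succ]
          push_cast
          field_simp
          simp [pow_succ']
          ring

/-- Linear ODEs with continuous coefficients on `[0,T]` have global solutions. -/
theorem exists_hasDerivWithinAt_linear [CompleteSpace E] (hT : 0 ≤ T) {A : ℝ → E →L[ℝ] E}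
    {f : ℝ → E} (hA : ContinuousOn A (Icc 0 T)) (hf : ContinuousOn f (Icc 0 T)) (z₀ : E) :
    ∃ z : ℝ → E, z 0 = z₀ ∧
      ∀ t ∈ Icc 0 T, HasDerivWithinAt z (A t (z t) + f t) (Icc 0 T) t := by
  obtain ⟨L, hL⟩ := exists_norm_le_of_continuousOn_Icc hA
  obtain ⟨n, hn⟩ := ((FloorSemiring.tendsto_pow_div_factorial_atTop (L * T : ℝ)).eventually
    (gt_mem_nhds zero_lt_one)).exists
  have hc : ContractingWith (⟨(L * T) ^ n / n.factorial, by positivity⟩ : NNReal)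
      (linearPicard hT hA hf z₀)^[n] := by
    refine ⟨hn, LipschitzWith.of_dist_le_mul fun α β => ?_⟩
    refine (ContinuousMap.dist_le (mul_nonneg (NNReal.coe_nonneg _) dist_nonneg)).2 fun t => ?_
    refine (dist_iterate_linearPicard_apply_le hT hA hf z₀ hL α β n t).trans ?_
    have := t.2.1
    change _ ≤ (L * T) ^ n / n.factorial * dist α β
    gcongr
    exact t.2.2
  have hfix := hc.isFixedPt_fixedPoint_iterate
  set α := hc.fixedPoint (linearPicard hT hA hf z₀)^[n]
  have hcont : ContinuousOn (fun s => A s (IccExtend hT α s) + f s) (Icc 0 T) :=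
    (hA.clm_apply α.continuous.Icc_extend'.continuousOn).add hf
  have hα : ∀ t ∈ Icc 0 T, IccExtend hT α t =
      z₀ + ∫ s in (0 : ℝ)..t, (A s (IccExtend hT α s) + f s) := fun t ht => by
    rw [IccExtend_of_mem _ _ ht]
    exact (DFunLike.congr_fun hfix ⟨t, ht⟩).symm
  refine ⟨IccExtend hT α, by simpa using hα 0 (left_mem_Icc.2 hT), fun t ht => ?_⟩
  exact (hasDerivWithinAt_const_add_integral hT hcont z₀ ht).congr hα (hα t ht)

/-- A solution of a homogeneous linear ODE on `[0,T]` that vanishes at `0` is zero. -/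
theorem eq_zero_of_hasDerivWithinAt_linear {A : ℝ → E →L[ℝ] E}
    (hA : ContinuousOn A (Icc 0 T)) {z : ℝ → E}
    (hz : ∀ t ∈ Icc 0 T, HasDerivWithinAt z (A t (z t)) (Icc 0 T) t) (h0 : z 0 = 0) :
    ∀ t ∈ Icc 0 T, z t = 0 := by
  obtain ⟨L, hL⟩ := exists_norm_le_of_continuousOn_Icc hA
  refine eq_zero_of_abs_deriv_le_mul_abs_self_of_eq_zero_right (K := L) (f' := fun t => A t (z t))
    (fun t ht => (hz t ht).continuousWithinAt) (fun t ht => ?_) h0 fun t ht =>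
      (A t).le_of_opNorm_le (hL t (Ico_subset_Icc_self ht)) _
  exact (hz t (Ico_subset_Icc_self ht)).mono_of_mem_nhdsWithin (Icc_mem_nhdsGE_of_mem ht)

/-- A solution of a homogeneous linear ODE on `[0,T]` that vanishes at `T` is zero. -/
theorem eq_zero_of_hasDerivWithinAt_linear_of_right {A : ℝ → E →L[ℝ] E}
    (hA : ContinuousOn A (Icc 0 T)) {z : ℝ → E}
    (hz : ∀ t ∈ Icc 0 T, HasDerivWithinAt z (A t (z t)) (Icc 0 T) t) (hzT : z T = 0) :
    ∀ t ∈ Icc 0 T, z t = 0 := by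
  have hmaps : MapsTo (fun t => T - t) (Icc 0 T) (Icc 0 T) := fun t ht =>
    ⟨sub_nonneg.2 ht.2, sub_le_self T ht.1⟩
  have h := eq_zero_of_hasDerivWithinAt_linear (A := fun t => -A (T - t)) (z := fun t => z (T - t))
    (hA.comp (by fun_prop) hmaps).neg (fun t ht => ?_) (by simpa using hzT)
  · intro t ht
    simpa using h (T - t) (hmaps ht)
  · simpa [Function.comp_def] using
      (hz (T - t) (hmaps ht)).scomp t ((hasDerivWithinAt_id t _).const_sub T) hmaps

end LinearODE

section HamiltonianBVP

variable {T : ℝ} {d : ℕ}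

theorem ContinuousOn.matrix_mulVec {m n : Type*} [Fintype n] {s : Set ℝ} {A : ℝ → Matrix m n ℝ}
    {x : ℝ → n → ℝ} (hA : ContinuousOn A s) (hx : ContinuousOn x s) :
    ContinuousOn (fun t => A t *ᵥ x t) s :=
  (continuous_fst.matrix_mulVec continuous_snd).comp_continuousOn (hA.prodMk hx)

theorem ContinuousOn.matrix_mul {l m n : Type*} [Fintype m] {s : Set ℝ} {A : ℝ → Matrix l m ℝ}
    {B : ℝ → Matrix m n ℝ} (hA : ContinuousOn A s) (hB : ContinuousOn B s) :
    ContinuousOn (fun t => A t * B t) s :=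
  (continuous_fst.matrix_mul continuous_snd).comp_continuousOn (hA.prodMk hB)

theorem ContinuousOn.matrix_transpose {m n : Type*} {s : Set ℝ} {A : ℝ → Matrix m n ℝ}
    (hA : ContinuousOn A s) : ContinuousOn (fun t => (A t)ᵀ) s :=
  continuous_id.matrix_transpose.comp_continuousOn hA

theorem ContinuousOn.matrix_inv {n : Type*} [Fintype n] [DecidableEq n] {s : Set ℝ}
    {A : ℝ → Matrix n n ℝ} (hA : ContinuousOn A s) (hu : ∀ t ∈ s, IsUnit (A t)) :
    ContinuousOn (fun t => (A t)⁻¹) s := fun t ht =>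
  (continuousAt_matrix_inv _ (by
    obtain ⟨v, hv⟩ := (Matrix.isUnit_iff_isUnit_det _).1 (hu t ht)
    rw [← hv]
    exact NormedRing.inverse_continuousAt v)).comp_continuousWithinAt (hA t ht)

theorem HasDerivWithinAt.dotProduct {n : Type*} [Fintype n] {s : Set ℝ} {u v : ℝ → n → ℝ}
    {u' v' : n → ℝ} {t : ℝ} (hu : HasDerivWithinAt u u' s t) (hv : HasDerivWithinAt v v' s t) :
    HasDerivWithinAt (fun t => u t ⬝ᵥ v t) (u' ⬝ᵥ v t + u t ⬝ᵥ v') s t := by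
  simp only [_root_.dotProduct, ← Finset.sum_add_distrib]
  exact HasDerivWithinAt.fun_sum fun i _ =>
    (hasDerivWithinAt_pi.1 hu i).fun_mul (hasDerivWithinAt_pi.1 hv i)

/-- `(u, y)` solves on `[0,T]` the linear Hamiltonian two-point boundary value problem
`u' = A u - G y + c`, `y' = -H u - Aᵀ y + h`, `u 0 = ξ`, `y T = P u T + p`. -/
structure HamiltonianBVP (T : ℝ) (A G H : ℝ → Mat d) (P : Mat d) (c h : ℝ → Vec d)
    (ξ p : Vec d) (u y : ℝ → Vec d) : Prop where
  left : u 0 = ξ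
  right : y T = P *ᵥ u T + p
  deriv_fst : ∀ t ∈ Icc 0 T,
    HasDerivWithinAt u (A t *ᵥ u t - G t *ᵥ y t + c t) (Icc 0 T) t
  deriv_snd : ∀ t ∈ Icc 0 T,
    HasDerivWithinAt y (-(H t *ᵥ u t) - (A t)ᵀ *ᵥ y t + h t) (Icc 0 T) t

namespace HamiltonianBVP

variable {A G H : ℝ → Mat d} {P : Mat d} {c h c₂ h₂ : ℝ → Vec d} {ξ p ξ₂ p₂ : Vec d}
  {u y u₂ y₂ : ℝ → Vec d}

theorem congr (hT : 0 ≤ T) (hs : HamiltonianBVP T A G H P c h ξ p u y)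
    (hu : EqOn u₂ u (Icc 0 T)) (hy : EqOn y₂ y (Icc 0 T)) :
    HamiltonianBVP T A G H P c h ξ p u₂ y₂ where
  left := by rw [hu (left_mem_Icc.2 hT), hs.left]
  right := by rw [hu (right_mem_Icc.2 hT), hy (right_mem_Icc.2 hT), hs.right]
  deriv_fst t ht := by
    rw [hu ht, hy ht]
    exact (hs.deriv_fst t ht).congr hu (hu ht)
  deriv_snd t ht := by
    rw [hu ht, hy ht]
    exact (hs.deriv_snd t ht).congr hy (hy ht)

theorem add (hs : HamiltonianBVP T A G H P c h ξ p u y)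
    (hs₂ : HamiltonianBVP T A G H P c₂ h₂ ξ₂ p₂ u₂ y₂) :
    HamiltonianBVP T A G H P (c + c₂) (h + h₂) (ξ + ξ₂) (p + p₂) (u + u₂) (y + y₂) where
  left := by simp [hs.left, hs₂.left]
  right := by
    simp only [Pi.add_apply, hs.right, hs₂.right, mulVec_add]
    abel
  deriv_fst t ht := by
    refine ((hs.deriv_fst t ht).add (hs₂.deriv_fst t ht)).congr_deriv ?_
    simp only [Pi.add_apply, mulVec_add]
    abel
  deriv_snd t ht := by
    refine ((hs.deriv_snd t ht).add (hs₂.deriv_snd t ht)).congr_deriv ?_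
    simp only [Pi.add_apply, mulVec_add]
    abel

theorem neg (hs : HamiltonianBVP T A G H P c h ξ p u y) :
    HamiltonianBVP T A G H P (-c) (-h) (-ξ) (-p) (-u) (-y) where
  left := by simp [hs.left]
  right := by
    simp only [Pi.neg_apply, hs.right, mulVec_neg]
    abel
  deriv_fst t ht := by
    refine (hs.deriv_fst t ht).neg.congr_deriv ?_
    simp only [Pi.neg_apply, mulVec_neg]
    abel
  deriv_snd t ht := by
    refine (hs.deriv_snd t ht).neg.congr_deriv ?_
    simp only [Pi.neg_apply, mulVec_neg]
    abel

end HamiltonianBVP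

/-- Multiplication by a matrix as a continuous linear map. -/
def mulVecCLM (A : Mat d) : Vec d →L[ℝ] Vec d := LinearMap.toContinuousLinearMap A.mulVecLin

@[simp]
theorem mulVecCLM_apply (A : Mat d) (v : Vec d) : mulVecCLM A v = A *ᵥ v := rfl

theorem continuousOn_mulVecCLM {A : ℝ → Mat d} {s : Set ℝ} (hA : ContinuousOn A s) :
    ContinuousOn (fun t => mulVecCLM (A t)) s :=
  continuousOn_clm_apply.2 fun _ => hA.matrix_mulVec continuousOn_const

/-- The system matrix of the Hamiltonian boundary value problem. -/
def hamiltonianCLM (A G H : Mat d) : Vec d × Vec d →L[ℝ] Vec d × Vec d :=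
  (mulVecCLM A ∘L .fst ℝ _ _ - mulVecCLM G ∘L .snd ℝ _ _).prod
    (-(mulVecCLM H ∘L .fst ℝ (Vec d) (Vec d)) - mulVecCLM Aᵀ ∘L .snd ℝ _ _)

@[simp]
theorem hamiltonianCLM_apply (A G H : Mat d) (z : Vec d × Vec d) :
    hamiltonianCLM A G H z = (A *ᵥ z.1 - G *ᵥ z.2, -(H *ᵥ z.1) - Aᵀ *ᵥ z.2) := rfl

variable {A G H : ℝ → Mat d} {P : Mat d}

theorem continuousOn_hamiltonianCLM {s : Set ℝ} (hA : ContinuousOn A s) (hG : ContinuousOn G s)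
    (hH : ContinuousOn H s) : ContinuousOn (fun t => hamiltonianCLM (A t) (G t) (H t)) s :=
  continuousOn_clm_apply.2 fun _ =>
    ((hA.matrix_mulVec continuousOn_const).sub (hG.matrix_mulVec continuousOn_const)).prodMk
      ((hH.matrix_mulVec continuousOn_const).neg.sub
        (hA.matrix_transpose.matrix_mulVec continuousOn_const))

/-- The homogeneous problem with positive semidefinite data has only the zero solution. -/
theorem HamiltonianBVP.eq_zero (hT : 0 < T) (hA : ContinuousOn A (Icc 0 T))
    (hG : ∀ t ∈ Icc 0 T, (G t).PosSemidef) (hH : ∀ t ∈ Icc 0 T, (H t).PosSemidef)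
    (hP : P.PosSemidef) {u y : ℝ → Vec d} (hs : HamiltonianBVP T A G H P 0 0 0 0 u y) :
    ∀ t ∈ Icc 0 T, u t = 0 ∧ y t = 0 := by
  have hGy : ∀ t ∈ Icc 0 T, 0 ≤ y t ⬝ᵥ G t *ᵥ y t := fun t ht => by
    simpa using (hG t ht).dotProduct_mulVec_nonneg (y t)
  have hHu : ∀ t ∈ Icc 0 T, 0 ≤ u t ⬝ᵥ H t *ᵥ u t := fun t ht => by
    simpa using (hH t ht).dotProduct_mulVec_nonneg (u t)
  have hderiv : ∀ t ∈ Icc 0 T, HasDerivWithinAt (fun t => u t ⬝ᵥ y t)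
      (-(y t ⬝ᵥ G t *ᵥ y t + u t ⬝ᵥ H t *ᵥ u t)) (Icc 0 T) t := fun t ht => by
    convert (hs.deriv_fst t ht).dotProduct (hs.deriv_snd t ht) using 1
    simp only [Pi.zero_apply, add_zero, sub_dotProduct, dotProduct_sub, dotProduct_neg]
    rw [dotProduct_mulVec (u t) (A t)ᵀ, vecMul_transpose, dotProduct_comm (G t *ᵥ y t)]
    ring
  have hanti : AntitoneOn (fun t => u t ⬝ᵥ y t) (Icc 0 T) :=
    antitoneOn_of_hasDerivWithinAt_nonpos (convex_Icc 0 T)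
      (fun t ht => (hderiv t ht).continuousWithinAt)
      (fun t ht => (hderiv t (interior_subset ht)).mono interior_subset)
      fun t ht => neg_nonpos.2 (add_nonneg (hGy t (interior_subset ht))
        (hHu t (interior_subset ht)))
  have h0 : u 0 ⬝ᵥ y 0 = 0 := by simp [hs.left]
  have h1 : 0 ≤ u T ⬝ᵥ y T := by
    simpa [hs.right] using hP.dotProduct_mulVec_nonneg (u T)
  have hzero : EqOn (fun t => u t ⬝ᵥ y t) (fun _ => 0) (Icc 0 T) := fun t ht =>
    le_antisymm ((hanti (left_mem_Icc.2 hT.le) ht ht.1).trans h0.le)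
      (h1.trans (hanti ht (right_mem_Icc.2 hT.le) ht.2))
  have hG0 : ∀ t ∈ Icc 0 T, G t *ᵥ y t = 0 := fun t ht => by
    have h : -(y t ⬝ᵥ G t *ᵥ y t + u t ⬝ᵥ H t *ᵥ u t) = 0 :=
      (uniqueDiffOn_Icc hT t ht).eq_deriv _ (hderiv t ht)
        ((hasDerivWithinAt_const t _ (0 : ℝ)).congr hzero (hzero ht))
    rw [← (hG t ht).dotProduct_mulVec_zero_iff]
    simp only [star_trivial]
    linarith [hGy t ht, hHu t ht]
  have hu : ∀ t ∈ Icc 0 T, u t = 0 :=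
    eq_zero_of_hasDerivWithinAt_linear (continuousOn_mulVecCLM hA)
      (fun t ht => by simpa [hG0 t ht] using hs.deriv_fst t ht) hs.left
  have hy : ∀ t ∈ Icc 0 T, y t = 0 :=
    eq_zero_of_hasDerivWithinAt_linear_of_right (continuousOn_mulVecCLM hA.matrix_transpose.neg)
      (fun t ht => by simpa [hu t ht, neg_mulVec] using hs.deriv_snd t ht)
      (by simp [hs.right, hu T (right_mem_Icc.2 hT.le)])
  exact fun t ht => ⟨hu t ht, hy t ht⟩

/-- The boundary value problem with positive semidefinite data is solvable, by shooting: the map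
sending the missing initial value to the terminal defect is affine with injective linear part. -/
theorem HamiltonianBVP.exists (hT : 0 < T) (hA : ContinuousOn A (Icc 0 T))
    (hGc : ContinuousOn G (Icc 0 T)) (hHc : ContinuousOn H (Icc 0 T))
    (hG : ∀ t ∈ Icc 0 T, (G t).PosSemidef) (hH : ∀ t ∈ Icc 0 T, (H t).PosSemidef)
    (hP : P.PosSemidef) {c h : ℝ → Vec d} (hc : ContinuousOn c (Icc 0 T))
    (hh : ContinuousOn h (Icc 0 T)) (ξ p : Vec d) :
    ∃ u y, HamiltonianBVP T A G H P c h ξ p u y := by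
  have hL := continuousOn_hamiltonianCLM hA hGc hHc
  obtain ⟨U, hU0, hU⟩ := exists_hasDerivWithinAt_linear hT.le
    ((ContinuousLinearMap.compL ℝ _ _ (Vec d × Vec d)).continuous.comp_continuousOn hL)
    (f := 0) continuousOn_const (ContinuousLinearMap.id ℝ (Vec d × Vec d))
  obtain ⟨w, hw0, hw⟩ := exists_hasDerivWithinAt_linear hT.le hL (hc.prodMk hh) (ξ, 0)
  let defect : Vec d →ₗ[ℝ] Vec d :=
    ((ContinuousLinearMap.snd ℝ _ _ - mulVecCLM P ∘L .fst ℝ _ _) ∘L U T ∘L .inr ℝ _ _ :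
      Vec d →L[ℝ] Vec d)
  have hhom : ∀ η, HamiltonianBVP T A G H P 0 0 0 (defect η)
      (fun t => (U t (0, η)).1) (fun t => (U t (0, η)).2) := fun η => by
    have hz : ∀ t ∈ Icc 0 T, HasDerivWithinAt (fun t => U t (0, η))
        (hamiltonianCLM (A t) (G t) (H t) (U t (0, η))) (Icc 0 T) t := fun t ht => by
      simpa using (hU t ht).clm_apply (hasDerivWithinAt_const t _ (0, η))
    refine ⟨by simp [hU0], by simp [defect], fun t ht => ?_, fun t ht => ?_⟩
    · simpa [Function.comp_def] using
        (ContinuousLinearMap.fst ℝ (Vec d) (Vec d)).hasFDerivAt.comp_hasDerivWithinAt t (hz t ht)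
    · simpa [Function.comp_def] using
        (ContinuousLinearMap.snd ℝ (Vec d) (Vec d)).hasFDerivAt.comp_hasDerivWithinAt t (hz t ht)
  have hinj : Function.Injective defect := by
    refine (injective_iff_map_eq_zero _).2 fun η hη => ?_
    have h0 := (HamiltonianBVP.eq_zero hT hA hG hH hP (hη ▸ hhom η) 0 (left_mem_Icc.2 hT.le)).2
    simpa [hU0] using h0
  obtain ⟨η, hη⟩ := LinearMap.injective_iff_surjective.1 hinj (P *ᵥ (w T).1 + p - (w T).2)
  have hpart : HamiltonianBVP T A G H P c h ξ ((w T).2 - P *ᵥ (w T).1)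
      (fun t => (w t).1) (fun t => (w t).2) := by
    refine ⟨by simp [hw0], by simp, fun t ht => ?_, fun t ht => ?_⟩
    · simpa [Function.comp_def] using
        (ContinuousLinearMap.fst ℝ (Vec d) (Vec d)).hasFDerivAt.comp_hasDerivWithinAt t (hw t ht)
    · simpa [Function.comp_def] using
        (ContinuousLinearMap.snd ℝ (Vec d) (Vec d)).hasFDerivAt.comp_hasDerivWithinAt t (hw t ht)
  have hsum := hpart.add (hhom η)
  rw [hη] at hsum
  refine ⟨_, _, by simpa using hsum⟩

/-- Solutions of the boundary value problem with positive semidefinite data are unique. -/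
theorem HamiltonianBVP.eqOn (hT : 0 < T) (hA : ContinuousOn A (Icc 0 T))
    (hG : ∀ t ∈ Icc 0 T, (G t).PosSemidef) (hH : ∀ t ∈ Icc 0 T, (H t).PosSemidef)
    (hP : P.PosSemidef) {c h : ℝ → Vec d} {ξ p : Vec d} {u y u₂ y₂ : ℝ → Vec d}
    (hs : HamiltonianBVP T A G H P c h ξ p u y) (hs₂ : HamiltonianBVP T A G H P c h ξ p u₂ y₂) :
    EqOn u₂ u (Icc 0 T) ∧ EqOn y₂ y (Icc 0 T) := by
  have h := HamiltonianBVP.eq_zero hT hA hG hH hP (by simpa using hs₂.add hs.neg)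
  exact ⟨fun t ht => by simpa [← sub_eq_add_neg, sub_eq_zero] using (h t ht).1,
    fun t ht => by simpa [← sub_eq_add_neg, sub_eq_zero] using (h t ht).2⟩

end HamiltonianBVP

section VolterraReduction

variable {T : ℝ} {d : ℕ}

theorem eq_const_add_integral_iff (hT : 0 ≤ T) {u f : ℝ → Vec d} (hf : ContinuousOn f (Icc 0 T))
    (c : Vec d) :
    (∀ t ∈ Icc 0 T, u t = c + ∫ s in (0:ℝ)..t, f s) ↔
      u 0 = c ∧ ∀ t ∈ Icc 0 T, HasDerivWithinAt u (f t) (Icc 0 T) t := by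
  refine ⟨fun h => ⟨by simpa using h 0 (left_mem_Icc.2 hT), fun t ht =>
    (hasDerivWithinAt_const_add_integral hT hf c ht).congr h (h t ht)⟩, fun h t ht => ?_⟩
  refine sub_eq_zero.1 (eq_zero_of_hasDerivWithinAt_linear (T := T)
    (z := fun t => u t - (c + ∫ s in (0:ℝ)..t, f s)) (A := fun _ => 0) continuousOn_const
    (fun r hr => ?_) (by simp [h.1]) t ht)
  simpa using (h.2 r hr).fun_sub (hasDerivWithinAt_const_add_integral hT hf c hr)

theorem eq_const_add_integral_right_iff (hT : 0 ≤ T) {y f : ℝ → Vec d}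
    (hf : ContinuousOn f (Icc 0 T)) (c : Vec d) :
    (∀ t ∈ Icc 0 T, y t = c + ∫ s in t..T, f s) ↔
      y T = c ∧ ∀ t ∈ Icc 0 T, HasDerivWithinAt y (-f t) (Icc 0 T) t := by
  have hT' := right_mem_Icc.2 hT
  have hswap : (∀ t ∈ Icc 0 T, y t = c + ∫ s in t..T, f s) ↔
      ∀ t ∈ Icc 0 T, y t = (c + ∫ s in (0:ℝ)..T, f s) + ∫ s in (0:ℝ)..t, -f s :=
    forall₂_congr fun t ht => by
      rw [intervalIntegral.integral_neg, ← sub_eq_add_neg, add_sub_assoc,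
        intervalIntegral.integral_interval_sub_left
          (intervalIntegrable_of_continuousOn_Icc hf (left_mem_Icc.2 hT) hT')
          (intervalIntegrable_of_continuousOn_Icc hf (left_mem_Icc.2 hT) ht)]
  refine ⟨fun h => ⟨by simpa using h T hT',
    ((eq_const_add_integral_iff hT hf.neg _).1 (hswap.1 h)).2⟩, fun h => hswap.2 ?_⟩
  have h0 := (eq_const_add_integral_iff hT hf.neg (y 0)).2 ⟨rfl, h.2⟩
  have hy0 : y 0 = c + ∫ s in (0:ℝ)..T, f s := by
    have := h0 T hT'
    rw [h.1] at this
    simp [this]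
  exact hy0 ▸ h0

theorem integral_const_mulVec {a b : ℝ} (N : Mat d) {f : ℝ → Vec d}
    (hf : IntervalIntegrable f volume a b) :
    ∫ s in a..b, N *ᵥ f s = N *ᵥ ∫ s in a..b, f s :=
  (mulVecCLM N).intervalIntegral_comp_comm hf

namespace IsFlowKernel

variable {K : ℝ → ℝ → Mat d}

theorem mul_inverse (hK : IsFlowKernel T d K) {t : ℝ} (ht : t ∈ Icc 0 T) :
    K t 0 * K 0 t = 1 := by
  rw [← hK.flow t ht 0 (left_mem_Icc.2 (ht.1.trans ht.2)) t ht, hK.diag t ht]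

theorem inverse_mul (hK : IsFlowKernel T d K) {t : ℝ} (ht : t ∈ Icc 0 T) :
    K 0 t * K t 0 = 1 :=
  mul_eq_one_comm.1 (hK.mul_inverse ht)

theorem continuousOn_inverse (hK : IsFlowKernel T d K) :
    ContinuousOn (fun t => K 0 t) (Icc 0 T) :=
  (hK.cont.matrix_inv fun _ ht => IsUnit.of_mul_eq_one _ (hK.mul_inverse ht)).congr fun _ ht =>
    (inv_eq_right_inv (hK.mul_inverse ht)).symm

theorem forward_iff (hK : IsFlowKernel T d K) {g x M : ℝ → Vec d}
    (hg : ContinuousOn g (Icc 0 T)) (ξ : Vec d) :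
    (∀ t ∈ Icc 0 T, x t = K t 0 *ᵥ ξ + M t + ∫ s in (0:ℝ)..t, K t s *ᵥ g s) ↔
      ∀ t ∈ Icc 0 T, K 0 t *ᵥ (x t - M t) = ξ + ∫ s in (0:ℝ)..t, K 0 s *ᵥ g s := by
  refine forall₂_congr fun t ht => ?_
  have h0 := left_mem_Icc.2 (ht.1.trans ht.2)
  have hI : ∫ s in (0:ℝ)..t, K t s *ᵥ g s = K t 0 *ᵥ ∫ s in (0:ℝ)..t, K 0 s *ᵥ g s := by
    rw [← integral_const_mulVec _ (intervalIntegrable_of_continuousOn_Icc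
      (hK.continuousOn_inverse.matrix_mulVec hg) h0 ht)]
    refine intervalIntegral.integral_congr fun s hs => ?_
    rw [uIcc_of_le ht.1] at hs
    simp only [mulVec_mulVec, ← hK.flow s ⟨hs.1, hs.2.trans ht.2⟩ 0 h0 t ht]
  rw [hI, add_right_comm, ← mulVec_add, ← sub_eq_iff_eq_add]
  refine ⟨fun h => ?_, fun h => ?_⟩
  · rw [h, mulVec_mulVec, hK.inverse_mul ht, one_mulVec]
  · rw [← h, mulVec_mulVec, hK.mul_inverse ht, one_mulVec]

theorem backward_iff (hK : IsFlowKernel T d K) {g y : ℝ → Vec d}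
    (hg : ContinuousOn g (Icc 0 T)) (w : Vec d) :
    (∀ t ∈ Icc 0 T, y t = (K T t)ᵀ *ᵥ w + ∫ s in t..T, (K s t)ᵀ *ᵥ g s) ↔
      ∀ t ∈ Icc 0 T, (K t 0)ᵀ *ᵥ y t = (K T 0)ᵀ *ᵥ w + ∫ s in t..T, (K s 0)ᵀ *ᵥ g s := by
  refine forall₂_congr fun t ht => ?_
  have h0 := left_mem_Icc.2 (ht.1.trans ht.2)
  have hT := right_mem_Icc.2 (ht.1.trans ht.2)
  have hsplit : ∀ s ∈ Icc 0 T, (K s t)ᵀ = (K 0 t)ᵀ * (K s 0)ᵀ := fun s hs => by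
    rw [hK.flow t ht 0 h0 s hs, transpose_mul]
  have hI : ∫ s in t..T, (K s t)ᵀ *ᵥ g s = (K 0 t)ᵀ *ᵥ ∫ s in t..T, (K s 0)ᵀ *ᵥ g s := by
    rw [← integral_const_mulVec _ (intervalIntegrable_of_continuousOn_Icc
      (hK.cont.matrix_transpose.matrix_mulVec hg) ht hT)]
    refine intervalIntegral.integral_congr fun s hs => ?_
    rw [uIcc_of_le ht.2] at hs
    simp only [mulVec_mulVec, hsplit s ⟨ht.1.trans hs.1, hs.2⟩]
  rw [hI, hsplit T hT, ← mulVec_mulVec, ← mulVec_add]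
  refine ⟨fun h => ?_, fun h => ?_⟩
  · rw [h, mulVec_mulVec, ← transpose_mul, hK.inverse_mul ht, transpose_one, one_mulVec]
  · rw [← h, mulVec_mulVec, ← transpose_mul, hK.mul_inverse ht, transpose_one, one_mulVec]

/-- In the coordinates `u t = K 0 t (x t - M t)` and `v t = (K t 0)ᵀ y t` the forward–backward
Volterra system is a Hamiltonian boundary value problem. -/
theorem solvesFB_iff {κ : ℕ} (hK : IsFlowKernel T d K) (hT : 0 ≤ T)
    {A C : ℝ → Mat d} {B : ℝ → Matrix (Fin d) (Fin κ) ℝ} {R : ℝ → Matrix (Fin κ) (Fin κ) ℝ}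
    {Qt Qbt St : ℝ → Mat d} {Q Qb S : Mat d} {ξ : Vec d} {m M x y : ℝ → Vec d}
    (hA : ContinuousOn A (Icc 0 T)) (hC : ContinuousOn C (Icc 0 T))
    (hB : ContinuousOn B (Icc 0 T)) (hR : ContinuousOn (fun t => (R t)⁻¹) (Icc 0 T))
    (hQt : ContinuousOn Qt (Icc 0 T)) (hQbt : ContinuousOn Qbt (Icc 0 T))
    (hSt : ContinuousOn St (Icc 0 T)) (hm : ContinuousOn m (Icc 0 T)) :
    SolvesFB T K A C B R Qt Qbt St Q Qb S ξ m M x y ↔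
      ContinuousOn x (Icc 0 T) ∧ ContinuousOn y (Icc 0 T) ∧
      HamiltonianBVP T (fun t => K 0 t * A t * K t 0)
        (fun t => (K 0 t * B t) * (R t)⁻¹ * (K 0 t * B t)ᵀ)
        (fun t => (K t 0)ᵀ * (Qt t + Qbt t) * K t 0) ((K T 0)ᵀ * (Q + Qb) * K T 0)
        (fun t => K 0 t *ᵥ (A t *ᵥ M t + C t *ᵥ m t))
        (fun t => (K t 0)ᵀ *ᵥ (Qbt t *ᵥ (St t *ᵥ m t) - (Qt t + Qbt t) *ᵥ M t))
        ξ ((K T 0)ᵀ *ᵥ ((Q + Qb) *ᵥ M T - Qb *ᵥ (S *ᵥ m T)))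
        (fun t => K 0 t *ᵥ (x t - M t)) (fun t => (K t 0)ᵀ *ᵥ y t) := by
  refine and_congr_right fun hx => and_congr_right fun hy => ?_
  have hx' : ∀ t ∈ Icc 0 T, K t 0 *ᵥ (K 0 t *ᵥ (x t - M t)) = x t - M t := fun t ht => by
    rw [mulVec_mulVec, hK.mul_inverse ht, one_mulVec]
  have hy' : ∀ t ∈ Icc 0 T, (K 0 t)ᵀ *ᵥ ((K t 0)ᵀ *ᵥ y t) = y t := fun t ht => by
    rw [mulVec_mulVec, ← transpose_mul, hK.mul_inverse ht, transpose_one, one_mulVec]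
  have hf : ContinuousOn (fun s => A s *ᵥ x s - B s *ᵥ ((R s)⁻¹ *ᵥ ((B s)ᵀ *ᵥ y s)) +
      C s *ᵥ m s) (Icc 0 T) :=
    ((hA.matrix_mulVec hx).sub (hB.matrix_mulVec (hR.matrix_mulVec
      (hB.matrix_transpose.matrix_mulVec hy)))).add (hC.matrix_mulVec hm)
  have hg : ContinuousOn (fun s => (Qt s + Qbt s) *ᵥ x s - Qbt s *ᵥ (St s *ᵥ m s) +
      (A s)ᵀ *ᵥ y s) (Icc 0 T) :=
    (((hQt.add hQbt).matrix_mulVec hx).sub (hQbt.matrix_mulVec (hSt.matrix_mulVec hm))).add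
      (hA.matrix_transpose.matrix_mulVec hy)
  rw [hK.forward_iff hf, hK.backward_iff hg,
    eq_const_add_integral_iff hT (hK.continuousOn_inverse.matrix_mulVec hf),
    eq_const_add_integral_right_iff hT (hK.cont.matrix_transpose.matrix_mulVec hg)]
  have hfst : ∀ t ∈ Icc 0 T,
      K 0 t *ᵥ (A t *ᵥ x t - B t *ᵥ ((R t)⁻¹ *ᵥ ((B t)ᵀ *ᵥ y t)) + C t *ᵥ m t) =
        (K 0 t * A t * K t 0) *ᵥ (K 0 t *ᵥ (x t - M t)) -
          ((K 0 t * B t) * (R t)⁻¹ * (K 0 t * B t)ᵀ) *ᵥ ((K t 0)ᵀ *ᵥ y t) +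
          K 0 t *ᵥ (A t *ᵥ M t + C t *ᵥ m t) := fun t ht => by
    simp only [transpose_mul, ← mulVec_mulVec, hx' t ht, hy' t ht]
    simp only [mulVec_add, mulVec_sub]
    abel
  have hsnd : ∀ t ∈ Icc 0 T,
      -((K t 0)ᵀ *ᵥ ((Qt t + Qbt t) *ᵥ x t - Qbt t *ᵥ (St t *ᵥ m t) + (A t)ᵀ *ᵥ y t)) =
        -(((K t 0)ᵀ * (Qt t + Qbt t) * K t 0) *ᵥ (K 0 t *ᵥ (x t - M t))) -
          (K 0 t * A t * K t 0)ᵀ *ᵥ ((K t 0)ᵀ *ᵥ y t) +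
          (K t 0)ᵀ *ᵥ (Qbt t *ᵥ (St t *ᵥ m t) - (Qt t + Qbt t) *ᵥ M t) := fun t ht => by
    simp only [transpose_mul, ← mulVec_mulVec, hx' t ht, hy' t ht]
    simp only [mulVec_add, mulVec_sub]
    abel
  have hright : (K T 0)ᵀ *ᵥ ((Q + Qb) *ᵥ x T - Qb *ᵥ (S *ᵥ m T)) =
      ((K T 0)ᵀ * (Q + Qb) * K T 0) *ᵥ (K 0 T *ᵥ (x T - M T)) +
        (K T 0)ᵀ *ᵥ ((Q + Qb) *ᵥ M T - Qb *ᵥ (S *ᵥ m T)) := by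
    simp only [← mulVec_mulVec, hx' T (right_mem_Icc.2 hT)]
    simp only [mulVec_sub]
    abel
  refine ⟨fun ⟨⟨h₁, h₂⟩, h₃, h₄⟩ => ⟨h₁, h₃.trans hright, fun t ht => ?_, fun t ht => ?_⟩,
    fun h => ⟨⟨h.left, fun t ht => ?_⟩, h.right.trans hright.symm, fun t ht => ?_⟩⟩
  · exact hfst t ht ▸ h₂ t ht
  · exact hsnd t ht ▸ h₄ t ht
  · exact (hfst t ht).symm ▸ h.deriv_fst t ht
  · exact (hsnd t ht).symm ▸ h.deriv_snd t ht

end IsFlowKernel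

end VolterraReduction

/-- under the LQ assumptions, for every `ξ` and continuous paths `m, M`, the
deterministic forward–backward Volterra system has exactly one pair of continuous solutions
on `[0,T]`. -/
theorem fb_volterra_existence_uniqueness
    (T : ℝ) (hT : 0 < T) (d κ : ℕ)
    (K : ℝ → ℝ → Mat d) (hK : IsFlowKernel T d K)
    (A C : ℝ → Mat d) (B : ℝ → Matrix (Fin d) (Fin κ) ℝ)
    (R : ℝ → Matrix (Fin κ) (Fin κ) ℝ) (Qt Qbt St : ℝ → Mat d)
    (Q Qb S : Mat d) (lam : ℝ) (hlam : 0 < lam)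
    (hA : ContinuousOn A (Icc (0:ℝ) T)) (hC : ContinuousOn C (Icc (0:ℝ) T))
    (hB : ContinuousOn B (Icc (0:ℝ) T)) (hR : ContinuousOn R (Icc (0:ℝ) T))
    (hQt : ContinuousOn Qt (Icc (0:ℝ) T)) (hQbt : ContinuousOn Qbt (Icc (0:ℝ) T))
    (hSt : ContinuousOn St (Icc (0:ℝ) T))
    (hRpos : ∀ t ∈ Icc (0:ℝ) T, (R t - lam • (1 : Matrix (Fin κ) (Fin κ) ℝ)).PosSemidef)
    (hQtpos : ∀ t ∈ Icc (0:ℝ) T, (Qt t).PosSemidef)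
    (hQbtpos : ∀ t ∈ Icc (0:ℝ) T, (Qbt t).PosSemidef)
    (hQpos : Q.PosSemidef) (hQbpos : Qb.PosSemidef)
    (ξ : Vec d) (m M : ℝ → Vec d)
    (hm : ContinuousOn m (Icc (0:ℝ) T)) (hM : ContinuousOn M (Icc (0:ℝ) T)) :
    ∃ x y : ℝ → Vec d,
      SolvesFB T K A C B R Qt Qbt St Q Qb S ξ m M x y ∧
      ∀ x₂ y₂ : ℝ → Vec d,
        SolvesFB T K A C B R Qt Qbt St Q Qb S ξ m M x₂ y₂ →
        ∀ t ∈ Icc (0:ℝ) T, x₂ t = x t ∧ y₂ t = y t := by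
  have hΨ := hK.continuousOn_inverse
  have hRpd : ∀ t ∈ Icc 0 T, (R t).PosDef := fun t ht => by
    have h := (PosDef.one.smul hlam).add_posSemidef (hRpos t ht)
    rwa [add_sub_cancel] at h
  have hRinv : ContinuousOn (fun t => (R t)⁻¹) (Icc 0 T) :=
    hR.matrix_inv fun t ht => (hRpd t ht).isUnit
  have hAc := (hΨ.matrix_mul hA).matrix_mul hK.cont
  have hG : ∀ t ∈ Icc 0 T, ((K 0 t * B t) * (R t)⁻¹ * (K 0 t * B t)ᵀ).PosSemidef :=
    fun t ht => by
      simpa only [conjTranspose_eq_transpose_of_trivial] using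
        (hRpd t ht).inv.posSemidef.mul_mul_conjTranspose_same (K 0 t * B t)
  have hH : ∀ t ∈ Icc 0 T, ((K t 0)ᵀ * (Qt t + Qbt t) * K t 0).PosSemidef := fun t ht => by
    simpa only [conjTranspose_eq_transpose_of_trivial] using
      ((hQtpos t ht).add (hQbtpos t ht)).conjTranspose_mul_mul_same (K t 0)
  have hP : ((K T 0)ᵀ * (Q + Qb) * K T 0).PosSemidef := by
    simpa only [conjTranspose_eq_transpose_of_trivial] using
      (hQpos.add hQbpos).conjTranspose_mul_mul_same (K T 0)
  obtain ⟨u, v, huv⟩ := HamiltonianBVP.exists hT hAc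
    (((hΨ.matrix_mul hB).matrix_mul hRinv).matrix_mul (hΨ.matrix_mul hB).matrix_transpose)
    ((hK.cont.matrix_transpose.matrix_mul (hQt.add hQbt)).matrix_mul hK.cont) hG hH hP
    (hΨ.matrix_mulVec ((hA.matrix_mulVec hM).add (hC.matrix_mulVec hm)))
    (hK.cont.matrix_transpose.matrix_mulVec
      ((hQbt.matrix_mulVec (hSt.matrix_mulVec hm)).sub ((hQt.add hQbt).matrix_mulVec hM)))
    ξ ((K T 0)ᵀ *ᵥ ((Q + Qb) *ᵥ M T - Qb *ᵥ (S *ᵥ m T)))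
  have hu : ContinuousOn u (Icc 0 T) := fun t ht => (huv.deriv_fst t ht).continuousWithinAt
  have hv : ContinuousOn v (Icc 0 T) := fun t ht => (huv.deriv_snd t ht).continuousWithinAt
  refine ⟨fun t => K t 0 *ᵥ u t + M t, fun t => (K 0 t)ᵀ *ᵥ v t, ?_, fun x₂ y₂ h₂ t ht => ?_⟩
  · refine (hK.solvesFB_iff hT.le hA hC hB hRinv hQt hQbt hSt hm).2
      ⟨(hK.cont.matrix_mulVec hu).add hM, hΨ.matrix_transpose.matrix_mulVec hv,
        huv.congr hT.le (fun t ht => ?_) (fun t ht => ?_)⟩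
    · simp only [add_sub_cancel_right, mulVec_mulVec, hK.inverse_mul ht, one_mulVec]
    · simp only [mulVec_mulVec, ← transpose_mul, hK.inverse_mul ht, transpose_one, one_mulVec]
  · obtain ⟨hux, hvy⟩ := huv.eqOn hT hAc hG hH hP
      ((hK.solvesFB_iff hT.le hA hC hB hRinv hQt hQbt hSt hm).1 h₂).2.2
    constructor
    · simp only [← hux ht, mulVec_mulVec, hK.mul_inverse ht, one_mulVec, sub_add_cancel]
    · simp only [← hvy ht, mulVec_mulVec, ← transpose_mul, hK.mul_inverse ht, transpose_one,
        one_mulVec]
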